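/- Let ε > 0, set S = (α+β)/2 + 1/2 + 1/(4·log n), T = ((α+β)/2)·(log((α+β)/2) + 2·log n − 1) + log n + 5/2, U = max{S + T, 2ε, 4ε·log n/τ, 4ε·(α+β)·log n/τ}, and take η = ε/U. Let X̂ minimize f over the set of n×n matrices with nonnegative entries, and assume h attains its minimum over ℝⁿ × ℝⁿ at some (u*, v*). Then for every integer k ≥ 1 + (τ·U/ε + 1)·(log(8·η·R) + log(τ·(τ+1)) + 3·log(U/ε)), the Sinkhorn iterate X^k = B(u^k, v^k) satisfies f(X^k) ≤ f(X̂) + ε. -/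

import Mathlib

/-- Generalized KL divergence, with the convention `0 · log 0 = 0`. -/
noncomputable def KL {n : ℕ} (x y : Fin n → ℝ) : ℝ :=
  ∑ i, (x i * Real.log (x i / y i) - x i + y i)

/-- The (unregularized) UOT objective. -/
noncomputable def fUOT {n : ℕ} (a b : Fin n → ℝ) (C : Fin n → Fin n → ℝ)
    (τ : ℝ) (X : Fin n → Fin n → ℝ) : ℝ :=
  (∑ i, ∑ j, C i j * X i j)
    + τ * KL (fun i => ∑ j, X i j) a + τ * KL (fun j => ∑ i, X i j) b

/-- The dual entropic regularized UOT objective. -/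
noncomputable def dualUOT {n : ℕ} (a b : Fin n → ℝ) (C : Fin n → Fin n → ℝ)
    (τ η : ℝ) (u v : Fin n → ℝ) : ℝ :=
  η * ∑ i, ∑ j, Real.exp ((u i + v j - C i j) / η)
    + τ * ∑ i, a i * Real.exp (-(u i) / τ)
    + τ * ∑ j, b j * Real.exp (-(v j) / τ)

/-!
The dual potentials `(u, v)` satisfy the optimality conditions `u + τ log (A / a) = 0` and
`v + τ log (B / b) = 0`, where `A` and `B` are the marginals of the plan `X = B(u, v)`, up to
*marginal defects*. Young's inequality `t z ≤ (t log (t / y) - t) + y exp z`, applied to the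
transport cost and to both divergences, is weak duality, and it loses only a term quadratic in the
defects. If the defects are at most `η / 2`, comparing values with `f ≥ 0` bounds the mass of `X` by
`S`, and `f X` exceeds `f X̂` by at most `η S` for the duality gap plus `η T` for the difference of
the entropies of `X` and `X̂`, where the mass of `X̂` is at most `(α + β) / 2`.

A Sinkhorn half-step is a `τ / (η + τ)`-contraction in the sup norm, so the defects decay
geometrically from their initial size `2 τ R`, and they are below `η / 2` from the stated iteration
count on.
-/

section Entropy

open Real InformationTheory

lemma mul_sub_mul_exp_le {t y : ℝ} (ht : 0 ≤ t) (hy : 0 < y) (z : ℝ) :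
    t * z - y * exp z ≤ t * log (t / y) - t := by
  rcases ht.eq_or_lt with rfl | ht
  · simpa using (mul_pos hy (exp_pos z)).le
  · have tangent := add_one_le_exp (z - log (t / y))
    rw [exp_sub, exp_log (div_pos ht hy), div_div_eq_mul_div, le_div_iff₀ ht] at tangent
    linarith

variable {ι κ : Type*}

lemma sum_mul_log_le_mul_log_sum [Fintype ι] {x : ι → ℝ} (hx : ∀ i, 0 ≤ x i) :
    ∑ i, x i * log (x i) ≤ (∑ i, x i) * log (∑ i, x i) := by
  rw [Finset.sum_mul]
  refine Finset.sum_le_sum fun i hi => ?_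
  rcases (hx i).eq_or_lt with h | h
  · simp [← h]
  · gcongr
    exact Finset.single_le_sum (fun j _ => hx j) hi

lemma mul_log_sum_sub_mul_log_card_le [Fintype ι] {x : ι → ℝ} (hx : ∀ i, 0 ≤ x i) :
    (∑ i, x i) * log (∑ i, x i) - (∑ i, x i) * log (Fintype.card ι)
      ≤ ∑ i, x i * log (x i) := by
  rcases (Finset.sum_nonneg fun i _ => hx i : 0 ≤ ∑ i, x i).eq_or_lt with h0 | hpos
  · have hzero : ∀ i, x i = 0 := by
      simpa using (Finset.sum_eq_zero_iff_of_nonneg fun i _ => hx i).1 h0.symm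
    simp [hzero]
  have : Nonempty ι := by
    by_contra hι
    simp [not_nonempty_iff.1 hι] at hpos
  have hcard : (0 : ℝ) < Fintype.card ι := by exact_mod_cast Fintype.card_pos
  set s := ∑ i, x i with hs
  have young : ∑ i, (x i * log (s / Fintype.card ι) - s / Fintype.card ι)
      ≤ ∑ i, (x i * log (x i) - x i) := Finset.sum_le_sum fun i _ => by
    simpa [exp_log (div_pos hpos hcard)] using
      mul_sub_mul_exp_le (hx i) one_pos (log (s / Fintype.card ι))
  simp only [Finset.sum_sub_distrib, ← Finset.sum_mul, ← hs, Finset.sum_const, Finset.card_univ,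
    nsmul_eq_mul, mul_div_cancel₀ _ hcard.ne', log_div hpos.ne' hcard.ne'] at young
  linarith

/-- The total mass of a transport plan. -/
def totalMass [Fintype ι] [Fintype κ] (X : ι → κ → ℝ) : ℝ := ∑ i, ∑ j, X i j

/-- The row marginal `X𝟙` of a transport plan. -/
def rowSum [Fintype κ] (X : ι → κ → ℝ) (i : ι) : ℝ := ∑ j, X i j

/-- The column marginal `Xᵀ𝟙` of a transport plan. -/
def colSum [Fintype ι] (X : ι → κ → ℝ) (j : κ) : ℝ := ∑ i, X i j

/-- The entropic regularizer `∑ (X log X - X)`, that is, minus the entropy. -/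
noncomputable def negEntropy [Fintype ι] [Fintype κ] (X : ι → κ → ℝ) : ℝ :=
  ∑ i, ∑ j, (X i j * log (X i j) - X i j)

lemma rowSum_nonneg [Fintype κ] {X : ι → κ → ℝ} (hX : ∀ i j, 0 ≤ X i j) (i : ι) :
    0 ≤ rowSum X i :=
  Finset.sum_nonneg fun j _ => hX i j

lemma colSum_nonneg [Fintype ι] {X : ι → κ → ℝ} (hX : ∀ i j, 0 ≤ X i j) (j : κ) :
    0 ≤ colSum X j :=
  Finset.sum_nonneg fun i _ => hX i j

variable [Fintype ι] [Fintype κ]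

lemma sum_rowSum (X : ι → κ → ℝ) : ∑ i, rowSum X i = totalMass X := rfl

lemma sum_colSum (X : ι → κ → ℝ) : ∑ j, colSum X j = totalMass X := Finset.sum_comm

lemma totalMass_nonneg {X : ι → κ → ℝ} (hX : ∀ i j, 0 ≤ X i j) : 0 ≤ totalMass X :=
  Finset.sum_nonneg fun i _ => Finset.sum_nonneg fun j _ => hX i j

lemma negEntropy_eq (X : ι → κ → ℝ) :
    negEntropy X = ∑ i, ∑ j, X i j * log (X i j) - totalMass X := by
  simp only [negEntropy, totalMass, Finset.sum_sub_distrib]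

lemma negEntropy_le {X : ι → κ → ℝ} (hX : ∀ i j, 0 ≤ X i j) {s : ℝ} (hs : totalMass X ≤ s) :
    negEntropy X ≤ s * log s - s + 1 := by
  have hconc : ∑ i, ∑ j, X i j * log (X i j) ≤ totalMass X * log (totalMass X) := by
    simpa only [totalMass, Fintype.sum_prod_type] using
      sum_mul_log_le_mul_log_sum (x := fun p : ι × κ => X p.1 p.2) fun p => hX p.1 p.2
  have hx := totalMass_nonneg hX
  have hmax : klFun (totalMass X) ≤ max (klFun 0) (klFun s) :=
    convexOn_klFun.le_max_of_mem_Icc (Set.mem_Ici.2 le_rfl) (Set.mem_Ici.2 (hx.trans hs)) ⟨hx, hs⟩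
  have hkl : klFun (totalMass X) ≤ 1 + klFun s := by
    have := klFun_nonneg (hx.trans hs)
    rw [klFun_zero] at hmax
    exact hmax.trans (max_le (by linarith) (by linarith))
  simp only [klFun_apply] at hkl
  rw [negEntropy_eq]
  linarith

lemma neg_negEntropy_le {X : ι → κ → ℝ} (hX : ∀ i j, 0 ≤ X i j) :
    -negEntropy X ≤ 1 + totalMass X * log (Fintype.card ι * Fintype.card κ) := by
  have hunif : totalMass X * log (totalMass X)
      - totalMass X * log (Fintype.card ι * Fintype.card κ) ≤ ∑ i, ∑ j, X i j * log (X i j) := by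
    simpa only [totalMass, Fintype.sum_prod_type, Fintype.card_prod, Nat.cast_mul] using
      mul_log_sum_sub_mul_log_card_le (x := fun p : ι × κ => X p.1 p.2) fun p => hX p.1 p.2
  have hkl := klFun_nonneg (totalMass_nonneg hX)
  rw [klFun_apply] at hkl
  rw [negEntropy_eq]
  linarith

end Entropy

section Objective

open Real

variable {n : ℕ} {a b : Fin n → ℝ} {C X : Fin n → Fin n → ℝ} {τ : ℝ}

lemma KL_nonneg {x y : Fin n → ℝ} (hx : ∀ i, 0 ≤ x i) (hy : ∀ i, 0 < y i) : 0 ≤ KL x y := by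
  refine Finset.sum_nonneg fun i _ => ?_
  have young := mul_sub_mul_exp_le (hx i) (hy i) 0
  rw [exp_zero] at young
  linarith

lemma KL_smul (x : Fin n → ℝ) {y : Fin n → ℝ} (hy : ∀ i, y i ≠ 0) (t : ℝ) :
    KL (t • x) y = t * KL x y + (1 - t) * ∑ i, y i + t * log t * ∑ i, x i := by
  simp only [KL, Finset.mul_sum, ← Finset.sum_add_distrib, Pi.smul_apply, smul_eq_mul]
  refine Finset.sum_congr rfl fun i _ => ?_
  rcases eq_or_ne t 0 with rfl | ht
  · simp
  rcases eq_or_ne (x i) 0 with hx | hx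
  · simp [hx]; ring
  · rw [mul_div_assoc, log_mul ht (div_ne_zero hx (hy i))]
    ring

lemma fUOT_eq (a b : Fin n → ℝ) (C : Fin n → Fin n → ℝ) (τ : ℝ) (X : Fin n → Fin n → ℝ) :
    fUOT a b C τ X
      = ∑ i, ∑ j, C i j * X i j + τ * KL (rowSum X) a + τ * KL (colSum X) b := rfl

lemma fUOT_nonneg (ha : ∀ i, 0 < a i) (hb : ∀ j, 0 < b j) (hC : ∀ i j, 0 ≤ C i j) (hτ : 0 ≤ τ)
    (hX : ∀ i j, 0 ≤ X i j) : 0 ≤ fUOT a b C τ X := by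
  have hrow := KL_nonneg (rowSum_nonneg hX) ha
  have hcol := KL_nonneg (colSum_nonneg hX) hb
  have hcost : 0 ≤ ∑ i, ∑ j, C i j * X i j :=
    Finset.sum_nonneg fun i _ => Finset.sum_nonneg fun j _ => mul_nonneg (hC i j) (hX i j)
  rw [fUOT_eq]
  positivity

lemma fUOT_smul (ha : ∀ i, a i ≠ 0) (hb : ∀ j, b j ≠ 0) (C : Fin n → Fin n → ℝ) (τ : ℝ)
    (X : Fin n → Fin n → ℝ) (t : ℝ) :
    fUOT a b C τ (t • X) = t * fUOT a b C τ X
      + (1 - t) * (τ * (∑ i, a i + ∑ j, b j)) + 2 * τ * (t * log t) * totalMass X := by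
  have hrow : rowSum (t • X) = t • rowSum X := by ext; simp [rowSum, Finset.mul_sum]
  have hcol : colSum (t • X) = t • colSum X := by ext; simp [colSum, Finset.mul_sum]
  have hcost : ∑ i, ∑ j, C i j * (t • X) i j = t * ∑ i, ∑ j, C i j * X i j := by
    simp only [Pi.smul_apply, smul_eq_mul, Finset.mul_sum, mul_left_comm]
  rw [fUOT_eq, fUOT_eq, hrow, hcol, hcost, KL_smul _ ha, KL_smul _ hb, sum_rowSum, sum_colSum]
  ring

-- First-order optimality along the ray `t • X`, read off at `t < 1` and then `t → 1`.
lemma totalMass_le_of_forall_fUOT_le (ha : ∀ i, 0 < a i) (hb : ∀ j, 0 < b j)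
    (hC : ∀ i j, 0 ≤ C i j) (hτ : 0 < τ) (hX : ∀ i j, 0 ≤ X i j)
    (hmin : ∀ Y : Fin n → Fin n → ℝ, (∀ i j, 0 ≤ Y i j) → fUOT a b C τ X ≤ fUOT a b C τ Y) :
    totalMass X ≤ (∑ i, a i + ∑ j, b j) / 2 := by
  have hx := totalMass_nonneg hX
  have hf := fUOT_nonneg ha hb hC hτ.le hX
  have hscaled : ∀ t : ℝ, 0 ≤ t → t < 1 → t * totalMass X ≤ (∑ i, a i + ∑ j, b j) / 2 := by
    intro t ht0 ht1
    have hopt := hmin (t • X) fun i j => mul_nonneg ht0 (hX i j)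
    rw [fUOT_smul (fun i => (ha i).ne') (fun j => (hb j).ne')] at hopt
    have hlog : t * log t ≤ t * (t - 1) := by
      rcases ht0.eq_or_lt with rfl | ht0
      · simp
      · gcongr
        exact log_le_sub_one_of_pos ht0
    have hentropy := mul_le_mul_of_nonneg_left hlog (by positivity : 0 ≤ 2 * τ * totalMass X)
    have : 0 ≤ (1 - t) * (τ * (∑ i, a i + ∑ j, b j - 2 * (t * totalMass X))) := by
      nlinarith [mul_nonneg (sub_nonneg.2 ht1.le) hf]
    have := nonneg_of_mul_nonneg_right this (sub_pos.2 ht1)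
    have := nonneg_of_mul_nonneg_right this hτ
    linarith
  rw [← one_mul (totalMass X)]
  refine mul_le_of_forall_lt_of_nonneg zero_le_one ?_ fun t ht0 ht1 x _ hlt =>
    (mul_le_mul_of_nonneg_left hlt.le ht0).trans (hscaled t ht0 ht1)
  simpa using hscaled 0 le_rfl one_pos

end Objective

section Gibbs

open Real

variable {ι κ : Type*}

/-- The matrix `B(u, v)` of the dual potentials `u`, `v`. -/
noncomputable def gibbsPlan (C : ι → κ → ℝ) (η : ℝ) (u : ι → ℝ) (v : κ → ℝ) (i : ι) (j : κ) : ℝ :=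
  exp ((u i + v j - C i j) / η)

/-- The defect of the optimality condition `u + τ log (A / a) = 0` linking a dual potential `u` to
the marginal `A` of the associated plan. -/
noncomputable def marginalDefect (τ : ℝ) (a A u : ι → ℝ) (i : ι) : ℝ :=
  u i + τ * (log (A i) - log (a i))

lemma gibbsPlan_pos (C : ι → κ → ℝ) (η : ℝ) (u : ι → ℝ) (v : κ → ℝ) (i : ι) (j : κ) :
    0 < gibbsPlan C η u v i j := exp_pos _

lemma gibbsPlan_swap (C : ι → κ → ℝ) (η : ℝ) (u : ι → ℝ) (v : κ → ℝ) (i : ι) (j : κ) :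
    gibbsPlan (fun j i => C i j) η v u j i = gibbsPlan C η u v i j := by
  rw [gibbsPlan, gibbsPlan, add_comm (v j)]

lemma rowSum_gibbsPlan_pos [Fintype κ] [Nonempty κ] (C : ι → κ → ℝ) (η : ℝ) (u : ι → ℝ) (v : κ → ℝ)
    (i : ι) : 0 < rowSum (gibbsPlan C η u v) i :=
  Finset.sum_pos (fun j _ => gibbsPlan_pos C η u v i j) Finset.univ_nonempty

lemma rowSum_gibbsPlan_swap [Fintype ι] (C : ι → κ → ℝ) (η : ℝ) (u : ι → ℝ) (v : κ → ℝ) :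
    rowSum (gibbsPlan (fun j i => C i j) η v u) = colSum (gibbsPlan C η u v) :=
  funext fun j => Finset.sum_congr rfl fun i _ => gibbsPlan_swap C η u v i j

lemma colSum_gibbsPlan_pos [Fintype ι] [Nonempty ι] (C : ι → κ → ℝ) (η : ℝ) (u : ι → ℝ) (v : κ → ℝ)
    (j : κ) : 0 < colSum (gibbsPlan C η u v) j := by
  rw [← rowSum_gibbsPlan_swap]
  exact rowSum_gibbsPlan_pos _ η v u j

variable [Fintype ι] [Fintype κ]

lemma sum_mul_add_sub_eq (C X : ι → κ → ℝ) (u : ι → ℝ) (v : κ → ℝ) :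
    ∑ i, ∑ j, X i j * (u i + v j - C i j)
      = ∑ i, rowSum X i * u i + ∑ j, colSum X j * v j - ∑ i, ∑ j, C i j * X i j := by
  simp only [rowSum, colSum, Finset.sum_mul]
  rw [Finset.sum_comm (f := fun j i => X i j * v j)]
  simp only [← Finset.sum_add_distrib, ← Finset.sum_sub_distrib]
  exact Finset.sum_congr rfl fun i _ => Finset.sum_congr rfl fun j _ => by ring

lemma mul_negEntropy_gibbsPlan (C : ι → κ → ℝ) {η : ℝ} (hη : η ≠ 0) (u : ι → ℝ) (v : κ → ℝ) :
    η * negEntropy (gibbsPlan C η u v)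
      = ∑ i, ∑ j, gibbsPlan C η u v i j * (u i + v j - C i j)
        - η * totalMass (gibbsPlan C η u v) := by
  have hlog : ∀ i j, η * log (gibbsPlan C η u v i j) = u i + v j - C i j := fun i j => by
    rw [gibbsPlan, log_exp, mul_div_cancel₀ _ hη]
  simp only [negEntropy_eq, mul_sub, Finset.mul_sum, mul_left_comm η, hlog]

lemma sum_mul_add_sub_le (C : ι → κ → ℝ) {η : ℝ} (hη : 0 < η) (u : ι → ℝ) (v : κ → ℝ)
    {X : ι → κ → ℝ} (hX : ∀ i j, 0 ≤ X i j) :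
    ∑ i, ∑ j, X i j * (u i + v j - C i j)
      ≤ η * negEntropy X + η * totalMass (gibbsPlan C η u v) := by
  simp only [negEntropy, totalMass, Finset.mul_sum, ← Finset.sum_add_distrib]
  refine Finset.sum_le_sum fun i _ => Finset.sum_le_sum fun j _ => ?_
  have young := mul_sub_mul_exp_le (hX i j) one_pos ((u i + v j - C i j) / η)
  rw [div_one, one_mul] at young
  calc X i j * (u i + v j - C i j) = η * (X i j * ((u i + v j - C i j) / η)) := by field_simp
    _ ≤ η * ((X i j * log (X i j) - X i j) + gibbsPlan C η u v i j) := by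
      rw [gibbsPlan]
      gcongr
      linarith
    _ = _ := mul_add _ _ _

lemma sum_mul_marginalDefect_le {τ δ : ℝ} {a A u : ι → ℝ} (hA : ∀ i, 0 ≤ A i)
    (hδ : ∀ i, |marginalDefect τ a A u i| ≤ δ) :
    ∑ i, A i * marginalDefect τ a A u i ≤ (∑ i, A i) * δ := by
  rw [Finset.sum_mul]
  exact Finset.sum_le_sum fun i _ => mul_le_mul_of_nonneg_left (abs_le.1 (hδ i)).2 (hA i)

-- In terms of the defect `r` the summand is `τ A (exp (-r/τ) - 1 + r/τ)`, quadratic in `r`.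
lemma sum_mul_marginalDefect_add_exp_le {a A u : ι → ℝ} (ha : ∀ i, 0 < a i) (hA : ∀ i, 0 < A i)
    {τ δ : ℝ} (hτ : 0 < τ) (hδτ : δ ≤ τ) (hδ : ∀ i, |marginalDefect τ a A u i| ≤ δ) :
    ∑ i, A i * marginalDefect τ a A u i + τ * ∑ i, a i * exp (-u i / τ) - τ * ∑ i, A i
      ≤ δ ^ 2 / τ * ∑ i, A i := by
  simp only [Finset.mul_sum, ← Finset.sum_add_distrib, ← Finset.sum_sub_distrib]
  refine Finset.sum_le_sum fun i _ => ?_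
  have hri := hδ i
  set r := marginalDefect τ a A u i with hr
  have hexp : a i * exp (-u i / τ) = A i * exp (-r / τ) := by
    have : -u i / τ = -r / τ + log (A i) - log (a i) := by
      rw [hr, marginalDefect]; field_simp; ring
    rw [this, exp_sub, exp_add, exp_log (hA i), exp_log (ha i)]
    field_simp [(ha i).ne']
  have hle_one : |-r / τ| ≤ 1 := by
    rw [abs_div, abs_neg, abs_of_pos hτ, div_le_one hτ]
    exact hri.trans hδτ
  have htaylor := (abs_le.1 (abs_exp_sub_one_sub_id_le hle_one)).2
  calc A i * r + τ * (a i * exp (-u i / τ)) - τ * A i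
      = A i * (τ * (exp (-r / τ) - 1 - -r / τ)) := by rw [hexp]; field_simp; ring
    _ ≤ A i * (τ * (-r / τ) ^ 2) := by have := (hA i).le; gcongr
    _ = r ^ 2 / τ * A i := by field_simp
    _ ≤ δ ^ 2 / τ * A i := by
      have := (hA i).le
      have : r ^ 2 ≤ δ ^ 2 := sq_le_sq.2 (hri.trans (le_abs_self δ))
      gcongr

end Gibbs

section Duality

open Real

variable {n : ℕ} {a b : Fin n → ℝ} {τ η : ℝ}

lemma dualUOT_eq (a b : Fin n → ℝ) (C : Fin n → Fin n → ℝ) (τ η : ℝ) (u v : Fin n → ℝ) :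
    dualUOT a b C τ η u v = η * totalMass (gibbsPlan C η u v)
      + τ * ∑ i, a i * exp (-u i / τ) + τ * ∑ j, b j * exp (-v j / τ) := rfl

lemma neg_sum_mul_sub_le_mul_KL {x y : Fin n → ℝ} (hx : ∀ i, 0 ≤ x i) (hy : ∀ i, 0 < y i)
    (hτ : 0 < τ) (w : Fin n → ℝ) :
    -(∑ i, x i * w i) - τ * ∑ i, y i * exp (-w i / τ) + τ * ∑ i, y i ≤ τ * KL x y := by
  simp only [KL, Finset.mul_sum, ← Finset.sum_neg_distrib, ← Finset.sum_add_distrib,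
    ← Finset.sum_sub_distrib]
  refine Finset.sum_le_sum fun i _ => ?_
  have young := mul_sub_mul_exp_le (hx i) (hy i) (-w i / τ)
  calc -(x i * w i) - τ * (y i * exp (-w i / τ)) + τ * y i
      = τ * (x i * (-w i / τ) - y i * exp (-w i / τ) + y i) := by field_simp
    _ ≤ τ * (x i * log (x i / y i) - x i + y i) := by gcongr

lemma mul_KL_eq_sum_mul_marginalDefect {x y : Fin n → ℝ} (hx : ∀ i, 0 < x i) (hy : ∀ i, 0 < y i)
    (τ : ℝ) (w : Fin n → ℝ) :
    τ * KL x y = ∑ i, x i * marginalDefect τ y x w i - ∑ i, x i * w i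
      - τ * ∑ i, x i + τ * ∑ i, y i := by
  simp only [KL, marginalDefect, Finset.mul_sum, ← Finset.sum_add_distrib,
    ← Finset.sum_sub_distrib]
  refine Finset.sum_congr rfl fun i _ => ?_
  rw [log_div (hx i).ne' (hy i).ne']
  ring

theorem neg_dualUOT_add_le_fUOT_add_negEntropy (ha : ∀ i, 0 < a i) (hb : ∀ j, 0 < b j)
    (C : Fin n → Fin n → ℝ) (hτ : 0 < τ) (hη : 0 < η) (u v : Fin n → ℝ)
    {X : Fin n → Fin n → ℝ} (hX : ∀ i j, 0 ≤ X i j) :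
    -dualUOT a b C τ η u v + τ * (∑ i, a i + ∑ j, b j)
      ≤ fUOT a b C τ X + η * negEntropy X := by
  have hrow := neg_sum_mul_sub_le_mul_KL (rowSum_nonneg hX) ha hτ u
  have hcol := neg_sum_mul_sub_le_mul_KL (colSum_nonneg hX) hb hτ v
  have hcoupling := sum_mul_add_sub_le C hη u v hX
  rw [sum_mul_add_sub_eq] at hcoupling
  rw [dualUOT_eq, fUOT_eq]
  linarith

lemma fUOT_gibbsPlan_add_negEntropy [NeZero n] (ha : ∀ i, 0 < a i) (hb : ∀ j, 0 < b j)
    (C : Fin n → Fin n → ℝ) (τ : ℝ) (hη : η ≠ 0) (u v : Fin n → ℝ) :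
    fUOT a b C τ (gibbsPlan C η u v) + η * negEntropy (gibbsPlan C η u v)
      = ∑ i, rowSum (gibbsPlan C η u v) i
            * marginalDefect τ a (rowSum (gibbsPlan C η u v)) u i
        + ∑ j, colSum (gibbsPlan C η u v) j
            * marginalDefect τ b (colSum (gibbsPlan C η u v)) v j
        - (2 * τ + η) * totalMass (gibbsPlan C η u v) + τ * (∑ i, a i + ∑ j, b j) := by
  have hrow := mul_KL_eq_sum_mul_marginalDefect (rowSum_gibbsPlan_pos C η u v) ha τ u
  have hcol := mul_KL_eq_sum_mul_marginalDefect (colSum_gibbsPlan_pos C η u v) hb τ v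
  rw [sum_rowSum] at hrow
  rw [sum_colSum] at hcol
  rw [fUOT_eq, mul_negEntropy_gibbsPlan C hη, sum_mul_add_sub_eq]
  linarith

theorem fUOT_gibbsPlan_add_negEntropy_le [NeZero n] (ha : ∀ i, 0 < a i) (hb : ∀ j, 0 < b j)
    (C : Fin n → Fin n → ℝ) (hτ : 0 < τ) (hη : 0 < η) {u v : Fin n → ℝ} {δ : ℝ} (hδτ : δ ≤ τ)
    (hrow : ∀ i, |marginalDefect τ a (rowSum (gibbsPlan C η u v)) u i| ≤ δ)
    (hcol : ∀ j, |marginalDefect τ b (colSum (gibbsPlan C η u v)) v j| ≤ δ)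
    {Y : Fin n → Fin n → ℝ} (hY : ∀ i j, 0 ≤ Y i j) :
    fUOT a b C τ (gibbsPlan C η u v) + η * negEntropy (gibbsPlan C η u v)
      ≤ fUOT a b C τ Y + η * negEntropy Y
        + 2 * (δ ^ 2 / τ) * totalMass (gibbsPlan C η u v) := by
  have hvalue := fUOT_gibbsPlan_add_negEntropy ha hb C τ hη.ne' u v
  have hdual := neg_dualUOT_add_le_fUOT_add_negEntropy ha hb C hτ hη u v hY
  have hrow := sum_mul_marginalDefect_add_exp_le ha (rowSum_gibbsPlan_pos C η u v) hτ hδτ hrow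
  have hcol := sum_mul_marginalDefect_add_exp_le hb (colSum_gibbsPlan_pos C η u v) hτ hδτ hcol
  rw [sum_rowSum] at hrow
  rw [sum_colSum] at hcol
  rw [dualUOT_eq] at hdual
  linarith

end Duality

section Accuracy

open Real

variable {n : ℕ} {a b : Fin n → ℝ} {C : Fin n → Fin n → ℝ} {τ η s : ℝ}

lemma neg_negEntropy_le_fin {X : Fin n → Fin n → ℝ} (hX : ∀ i j, 0 ≤ X i j) :
    -negEntropy X ≤ 1 + 2 * totalMass X * log n := by
  have h := neg_negEntropy_le hX
  rw [Fintype.card_fin, ← sq, log_pow] at h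
  push_cast at h
  linarith

theorem totalMass_gibbsPlan_le (hn : 2 ≤ n) (ha : ∀ i, 0 < a i) (hb : ∀ j, 0 < b j)
    (hC : ∀ i j, 0 ≤ C i j) (hτ : 0 < τ) (hη : 0 < η) (hs : ∑ i, a i + ∑ j, b j = 2 * s)
    (hητ : 4 * η * log n ≤ τ) (hηsτ : 8 * η * s * log n ≤ τ) {u v : Fin n → ℝ}
    (hrow : ∀ i, |marginalDefect τ a (rowSum (gibbsPlan C η u v)) u i| ≤ η / 2)
    (hcol : ∀ j, |marginalDefect τ b (colSum (gibbsPlan C η u v)) v j| ≤ η / 2) :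
    totalMass (gibbsPlan C η u v) ≤ s + 1 / 2 + 1 / (4 * log n) := by
  have : NeZero n := ⟨by omega⟩
  have hL : 0 < log n := log_pos (by exact_mod_cast hn)
  have hpos := fun i j => (gibbsPlan_pos C η u v i j).le
  have hvalue := fUOT_gibbsPlan_add_negEntropy ha hb C τ hη.ne' u v
  have hnonneg := fUOT_nonneg ha hb hC hτ.le hpos
  have hentropy := mul_le_mul_of_nonneg_left (neg_negEntropy_le_fin hpos) hη.le
  have hrow := sum_mul_marginalDefect_le (rowSum_nonneg hpos) hrow
  have hcol := sum_mul_marginalDefect_le (colSum_nonneg hpos) hcol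
  rw [sum_rowSum] at hrow
  rw [sum_colSum] at hcol
  rw [hs] at hvalue
  have hmass : (τ - η * log n) * totalMass (gibbsPlan C η u v) ≤ τ * s + η / 2 := by linarith
  have hbudget : τ * s + η / 2 ≤ (τ - η * log n) * (s + 1 / 2 + 1 / (4 * log n)) := by
    have hinv : η ≤ τ * (1 / (4 * log n)) := by
      rw [mul_one_div, le_div_iff₀ (by positivity)]
      linarith
    have hcancel : η * log n * (1 / (4 * log n)) = η / 4 := by field_simp
    linarith
  exact le_of_mul_le_mul_left (hmass.trans hbudget) (by linarith [mul_pos hη hL])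

-- With `x = totalMass X ≤ S`, the duality gap costs at most `η x ≤ η S`, and `η T` is what the
-- entropy bounds for `X` and `Y` add up to when `x = S`.
theorem fUOT_gibbsPlan_le (hn : 2 ≤ n) (ha : ∀ i, 0 < a i) (hb : ∀ j, 0 < b j)
    (hC : ∀ i j, 0 ≤ C i j) (hη : 0 < η) (hη2τ : η ≤ 2 * τ)
    (hs : ∑ i, a i + ∑ j, b j = 2 * s)
    (hητ : 4 * η * log n ≤ τ) (hηsτ : 8 * η * s * log n ≤ τ) {u v : Fin n → ℝ}
    (hrow : ∀ i, |marginalDefect τ a (rowSum (gibbsPlan C η u v)) u i| ≤ η / 2)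
    (hcol : ∀ j, |marginalDefect τ b (colSum (gibbsPlan C η u v)) v j| ≤ η / 2)
    {Y : Fin n → Fin n → ℝ} (hY : ∀ i j, 0 ≤ Y i j) (hYs : totalMass Y ≤ s) :
    fUOT a b C τ (gibbsPlan C η u v) ≤ fUOT a b C τ Y
      + η * ((s + 1 / 2 + 1 / (4 * log n))
        + (s * (log s + 2 * log n - 1) + log n + 5 / 2)) := by
  have : NeZero n := ⟨by omega⟩
  have hL : 0 < log n := log_pos (by exact_mod_cast hn)
  have hτ : 0 < τ := by linarith
  have hpos := fun i j => (gibbsPlan_pos C η u v i j).le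
  have hmass := totalMass_gibbsPlan_le hn ha hb hC hτ hη hs hητ hηsτ hrow hcol
  have hgap := fUOT_gibbsPlan_add_negEntropy_le ha hb C hτ hη (by linarith) hrow hcol hY
  set X := gibbsPlan C η u v
  have hgap_le : 2 * ((η / 2) ^ 2 / τ) * totalMass X ≤ η * (s + 1 / 2 + 1 / (4 * log n)) := by
    have : 2 * ((η / 2) ^ 2 / τ) ≤ η := by
      rw [← mul_div_assoc, div_le_iff₀ hτ]
      nlinarith
    have := totalMass_nonneg hpos
    gcongr
  have hmassL : totalMass X * log n ≤ s * log n + log n / 2 + 1 / 4 :=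
    calc totalMass X * log n ≤ (s + 1 / 2 + 1 / (4 * log n)) * log n := by gcongr
      _ = s * log n + log n / 2 + 1 / 4 := by field_simp
  have hentropy : negEntropy Y - negEntropy X
      ≤ s * (log s + 2 * log n - 1) + log n + 5 / 2 := by
    linarith [negEntropy_le hY hYs, neg_negEntropy_le_fin hpos]
  linarith [mul_le_mul_of_nonneg_left hentropy hη.le]

end Accuracy

section Sinkhorn

open Real

variable {ι κ : Type*}

lemma log_sum_exp_le_add [Fintype κ] [Nonempty κ] {x y : κ → ℝ} {D : ℝ}
    (h : ∀ j, x j ≤ y j + D) : log (∑ j, exp (x j)) ≤ log (∑ j, exp (y j)) + D := by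
  have hpos : ∀ z : κ → ℝ, 0 < ∑ j, exp (z j) := fun z =>
    Finset.sum_pos (fun j _ => exp_pos _) Finset.univ_nonempty
  calc log (∑ j, exp (x j)) ≤ log (∑ j, exp (y j + D)) :=
        log_le_log (hpos x) (Finset.sum_le_sum fun j _ => exp_le_exp.2 (h j))
    _ = log (∑ j, exp (y j)) + D := by
        simp only [exp_add, ← Finset.sum_mul]
        rw [log_mul (hpos y).ne' (exp_pos D).ne', log_exp]

lemma log_rowSum_gibbsPlan [Fintype κ] [Nonempty κ] (C : ι → κ → ℝ) (η : ℝ) (u : ι → ℝ)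
    (v : κ → ℝ) (i : ι) :
    log (rowSum (gibbsPlan C η u v) i) = u i / η + log (rowSum (gibbsPlan C η 0 v) i) := by
  have hfactor : rowSum (gibbsPlan C η u v) i
      = exp (u i / η) * rowSum (gibbsPlan C η 0 v) i := by
    simp only [rowSum, gibbsPlan, Finset.mul_sum, ← exp_add, Pi.zero_apply, ← add_div]
    exact Finset.sum_congr rfl fun j _ => by ring_nf
  rw [hfactor, log_mul (exp_pos _).ne' (rowSum_gibbsPlan_pos C η 0 v i).ne', log_exp]

lemma log_rowSum_gibbsPlan_le_add_dist [Fintype κ] [Nonempty κ] (C : ι → κ → ℝ) {η : ℝ}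
    (hη : 0 < η) (u : ι → ℝ) (v w : κ → ℝ) (i : ι) :
    log (rowSum (gibbsPlan C η u v) i) ≤ log (rowSum (gibbsPlan C η u w) i) + dist v w / η := by
  refine log_sum_exp_le_add fun j => ?_
  have := (abs_le.1 (dist_le_pi_dist v w j)).2
  rw [← add_div]
  gcongr
  linarith

lemma abs_log_rowSum_gibbsPlan_zero_le [Fintype κ] [Nonempty κ] {C : ι → κ → ℝ} {η c : ℝ}
    (hη : 0 < η) {i : ι} (hC : ∀ j, 0 ≤ C i j) (hc : ∀ j, C i j ≤ c) (v : κ → ℝ) :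
    |log (rowSum (gibbsPlan C η 0 v) i)|
      ≤ max (log (Fintype.card κ)) (c / η - log (Fintype.card κ)) + ‖v‖ / η := by
  have hzero : log (∑ _j : κ, exp 0) = log (Fintype.card κ) := by simp
  have hv := fun j => abs_le.1 (norm_le_pi_norm v j)
  have hupper : log (rowSum (gibbsPlan C η 0 v) i) ≤ log (∑ _j : κ, exp 0) + ‖v‖ / η := by
    refine log_sum_exp_le_add fun j => ?_
    rw [Pi.zero_apply, zero_add, zero_add]
    gcongr
    linarith [hC j, (hv j).2]
  have hlower : log (∑ _j : κ, exp 0)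
      ≤ log (rowSum (gibbsPlan C η 0 v) i) + (c / η + ‖v‖ / η) := by
    refine log_sum_exp_le_add fun j => ?_
    rw [Pi.zero_apply, zero_add, ← add_div, ← add_div]
    exact div_nonneg (by linarith [hc j, (hv j).1]) hη.le
  rw [hzero] at hupper hlower
  rw [abs_le]
  constructor
  · linarith [le_max_right (log (Fintype.card κ)) (c / η - log (Fintype.card κ))]
  · linarith [le_max_left (log (Fintype.card κ)) (c / η - log (Fintype.card κ))]

/-- The potential `u` that minimizes the dual objective for fixed `v`. A Sinkhorn half-step sends
`(u, v)` to `(sinkhornStep a C τ η v, v)`: the value does not depend on the previous `u`. -/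
noncomputable def sinkhornStep [Fintype κ] (a : ι → ℝ) (C : ι → κ → ℝ) (τ η : ℝ) (v : κ → ℝ)
    (i : ι) : ℝ :=
  η * τ / (η + τ) * (log (a i) - log (rowSum (gibbsPlan C η 0 v) i))

lemma sinkhornStep_eq [Fintype κ] [Nonempty κ] (a : ι → ℝ) (C : ι → κ → ℝ) (τ η : ℝ) (u : ι → ℝ)
    (v : κ → ℝ) (i : ι) :
    η * τ / (η + τ) * (u i / η + log (a i) - log (rowSum (gibbsPlan C η u v) i))
      = sinkhornStep a C τ η v i := by
  rw [log_rowSum_gibbsPlan, sinkhornStep]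
  ring

lemma marginalDefect_gibbsPlan [Fintype κ] [Nonempty κ] (a : ι → ℝ) (C : ι → κ → ℝ) {τ η : ℝ}
    (hτ : 0 < τ) (hη : 0 < η) (u : ι → ℝ) (v : κ → ℝ) (i : ι) :
    marginalDefect τ a (rowSum (gibbsPlan C η u v)) u i
      = (η + τ) / η * (u i - sinkhornStep a C τ η v i) := by
  rw [marginalDefect, log_rowSum_gibbsPlan, sinkhornStep]
  field_simp
  ring

variable [Fintype ι] [Fintype κ]

lemma abs_marginalDefect_gibbsPlan_le [Nonempty κ] (a : ι → ℝ) (C : ι → κ → ℝ) {τ η : ℝ}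
    (hτ : 0 < τ) (hη : 0 < η) (u : ι → ℝ) (v : κ → ℝ) (i : ι) :
    |marginalDefect τ a (rowSum (gibbsPlan C η u v)) u i|
      ≤ (η + τ) / η * dist u (sinkhornStep a C τ η v) := by
  rw [marginalDefect_gibbsPlan a C hτ hη, abs_mul, abs_of_pos (by positivity)]
  gcongr
  exact dist_le_pi_dist u (sinkhornStep a C τ η v) i

lemma lipschitzWith_sinkhornStep [Nonempty κ] (a : ι → ℝ) (C : ι → κ → ℝ) {τ η : ℝ}
    (hτ : 0 < τ) (hη : 0 < η) :
    LipschitzWith (τ / (η + τ)).toNNReal (sinkhornStep a C τ η) := by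
  refine LipschitzWith.of_dist_le_mul fun v w => ?_
  rw [Real.coe_toNNReal _ (by positivity)]
  refine (dist_pi_le_iff (by positivity)).2 fun i => ?_
  have hvw := log_rowSum_gibbsPlan_le_add_dist C hη 0 v w i
  have hwv := log_rowSum_gibbsPlan_le_add_dist C hη 0 w v i
  rw [dist_comm w v] at hwv
  calc dist (sinkhornStep a C τ η v i) (sinkhornStep a C τ η w i)
      = η * τ / (η + τ)
        * |log (rowSum (gibbsPlan C η 0 w) i) - log (rowSum (gibbsPlan C η 0 v) i)| := by
        rw [Real.dist_eq, sinkhornStep, sinkhornStep, ← mul_sub, sub_sub_sub_cancel_left, abs_mul,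
          abs_of_pos (by positivity)]
    _ ≤ η * τ / (η + τ) * (dist v w / η) := by
        gcongr
        exact abs_le.2 ⟨by linarith, by linarith⟩
    _ = τ / (η + τ) * dist v w := by field_simp

lemma norm_sinkhornStep_le [Nonempty ι] [Nonempty κ] {a : ι → ℝ} {C : ι → κ → ℝ} {τ η c m : ℝ}
    (hC : ∀ i j, 0 ≤ C i j) (hc : ∀ i j, C i j ≤ c) (ham : ∀ i, |log (a i)| ≤ m)
    (hτ : 0 < τ) (hη : 0 < η) (v : κ → ℝ) :
    ‖sinkhornStep a C τ η v‖ ≤ η * τ / (η + τ)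
      * (m + max (log (Fintype.card κ)) (c / η - log (Fintype.card κ)) + ‖v‖ / η) := by
  refine (pi_norm_le_iff_of_nonempty _).2 fun i => ?_
  have hlse := abs_log_rowSum_gibbsPlan_zero_le hη (hC i) (hc i) v
  rw [sinkhornStep, norm_mul, Real.norm_of_nonneg (by positivity)]
  gcongr
  rw [add_assoc]
  exact (norm_sub_le _ _).trans (add_le_add (ham i) hlse)

/-- One full Sinkhorn sweep `v ↦ u ↦ v`. -/
noncomputable def sinkhornSweep (a : ι → ℝ) (b : κ → ℝ) (C : ι → κ → ℝ) (τ η : ℝ) (v : κ → ℝ) :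
    κ → ℝ :=
  sinkhornStep b (fun j i => C i j) τ η (sinkhornStep a C τ η v)

lemma lipschitzWith_sinkhornSweep [Nonempty ι] [Nonempty κ] (a : ι → ℝ) (b : κ → ℝ)
    (C : ι → κ → ℝ) {τ η : ℝ} (hτ : 0 < τ) (hη : 0 < η) :
    LipschitzWith ((τ / (η + τ)).toNNReal ^ 2) (sinkhornSweep a b C τ η) := by
  rw [sq]
  exact (lipschitzWith_sinkhornStep b (fun j i => C i j) hτ hη).comp
    (lipschitzWith_sinkhornStep a C hτ hη)

lemma norm_sinkhornSweep_zero_le [Nonempty ι] [Nonempty κ] {a : ι → ℝ} {b : κ → ℝ}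
    {C : ι → κ → ℝ} {τ η R : ℝ} (hC : ∀ i j, 0 ≤ C i j) (hτ : 0 < τ) (hη : 0 < η)
    (hκ : ‖fun i => log (a i)‖ + max (log (Fintype.card κ)) (‖C‖ / η - log (Fintype.card κ)) ≤ R)
    (hι : ‖fun j => log (b j)‖ + max (log (Fintype.card ι)) (‖C‖ / η - log (Fintype.card ι)) ≤ R) :
    ‖sinkhornSweep a b C τ η 0‖ ≤ 2 * (η * τ / (η + τ)) * R := by
  have ham := norm_le_pi_norm fun i => log (a i)
  have hbm := norm_le_pi_norm fun j => log (b j)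
  have hc : ∀ i j, C i j ≤ ‖C‖ := fun i j =>
    (le_abs_self _).trans ((norm_le_pi_norm (C i) j).trans (norm_le_pi_norm C i))
  have hfirst := norm_sinkhornStep_le hC hc ham hτ hη 0
  have hsecond := norm_sinkhornStep_le (fun j i => hC i j) (fun j i => hc i j) hbm hτ hη
    (sinkhornStep a C τ η 0)
  rw [norm_zero, zero_div, add_zero] at hfirst
  have hu : ‖sinkhornStep a C τ η 0‖ ≤ η * τ / (η + τ) * R := hfirst.trans (by gcongr)
  have hR : 0 ≤ R := nonneg_of_mul_nonneg_right ((norm_nonneg _).trans hu) (by positivity)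
  have hu_div : ‖sinkhornStep a C τ η 0‖ / η ≤ R :=
    calc ‖sinkhornStep a C τ η 0‖ / η ≤ η * τ / (η + τ) * R / η := by gcongr
      _ = τ / (η + τ) * R := by field_simp
      _ ≤ R := mul_le_of_le_one_left hR ((div_le_one (by positivity)).2 (by linarith))
  calc ‖sinkhornSweep a b C τ η 0‖ ≤ η * τ / (η + τ) * (R + R) := hsecond.trans (by gcongr)
    _ = 2 * (η * τ / (η + τ)) * R := by ring

/-- `u` and `v` obey the alternating Sinkhorn recursion, from an arbitrary starting point:
`u` is updated at even times, `v` at odd times. -/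
structure IsSinkhornSequence (a : ι → ℝ) (b : κ → ℝ) (C : ι → κ → ℝ) (τ η : ℝ)
    (u : ℕ → ι → ℝ) (v : ℕ → κ → ℝ) : Prop where
  even_step : ∀ k, Even k →
    (u (k + 1) = fun i => η * τ / (η + τ)
      * (u k i / η + log (a i) - log (rowSum (gibbsPlan C η (u k) (v k)) i))) ∧ v (k + 1) = v k
  odd_step : ∀ k, Odd k →
    (v (k + 1) = fun j => η * τ / (η + τ)
      * (v k j / η + log (b j) - log (colSum (gibbsPlan C η (u k) (v k)) j))) ∧ u (k + 1) = u k

namespace IsSinkhornSequence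

variable {a : ι → ℝ} {b : κ → ℝ} {C : ι → κ → ℝ} {τ η : ℝ} {u : ℕ → ι → ℝ} {v : ℕ → κ → ℝ}

lemma u_two_mul_add_one [Nonempty κ] (h : IsSinkhornSequence a b C τ η u v) (l : ℕ) :
    u (2 * l + 1) = sinkhornStep a C τ η (v (2 * l)) := by
  rw [(h.even_step _ (even_two_mul l)).1]
  exact funext fun i => sinkhornStep_eq a C τ η _ _ i

lemma v_two_mul_add_two [Nonempty ι] (h : IsSinkhornSequence a b C τ η u v) (l : ℕ) :
    v (2 * l + 2) = sinkhornStep b (fun j i => C i j) τ η (u (2 * l + 1)) := by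
  rw [(h.odd_step _ (odd_two_mul_add_one l)).1, ← rowSum_gibbsPlan_swap]
  exact funext fun j => sinkhornStep_eq b _ τ η _ _ j

variable [Nonempty ι] [Nonempty κ]

lemma v_two_mul (h : IsSinkhornSequence a b C τ η u v) (l : ℕ) :
    v (2 * l) = (sinkhornSweep a b C τ η)^[l] (v 0) := by
  induction l with
  | zero => rfl
  | succ l ih =>
    rw [Function.iterate_succ_apply', ← ih, sinkhornSweep, ← h.u_two_mul_add_one,
      ← h.v_two_mul_add_two, mul_add_one]

lemma dist_v_two_mul_le (h : IsSinkhornSequence a b C τ η u v) (hτ : 0 < τ) (hη : 0 < η) (l : ℕ) :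
    dist (v (2 * l)) (v (2 * l + 2))
      ≤ (τ / (η + τ)) ^ (2 * l) * dist (v 0) (sinkhornSweep a b C τ η (v 0)) := by
  have hgeom := (lipschitzWith_sinkhornSweep a b C hτ hη).dist_iterate_succ_le_geometric (v 0) l
  rw [← h.v_two_mul, ← h.v_two_mul, NNReal.coe_pow, Real.coe_toNNReal _ (by positivity),
    ← pow_mul, mul_comm (dist _ _)] at hgeom
  exact hgeom

-- The potential updated last satisfies its own fixed-point equation exactly; the other one is one
-- contraction behind.
lemma dist_sinkhornStep_le (h : IsSinkhornSequence a b C τ η u v) (hτ : 0 < τ) (hη : 0 < η)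
    (k : ℕ) :
    dist (u (k + 1)) (sinkhornStep a C τ η (v (k + 1)))
        ≤ (τ / (η + τ)) ^ k * dist (v 0) (sinkhornSweep a b C τ η (v 0)) ∧
      dist (v (k + 1)) (sinkhornStep b (fun j i => C i j) τ η (u (k + 1)))
        ≤ (τ / (η + τ)) ^ k * dist (v 0) (sinkhornSweep a b C τ η (v 0)) := by
  obtain ⟨l, rfl | rfl⟩ := Nat.even_or_odd' k
  · constructor
    · rw [(h.even_step _ (even_two_mul l)).2, h.u_two_mul_add_one, dist_self]
      positivity
    · rw [(h.even_step _ (even_two_mul l)).2, ← h.v_two_mul_add_two]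
      exact h.dist_v_two_mul_le hτ hη l
  · constructor
    · have hlip := (lipschitzWith_sinkhornStep a C hτ hη).dist_le_mul (v (2 * l)) (v (2 * l + 2))
      rw [Real.coe_toNNReal _ (by positivity), ← h.u_two_mul_add_one] at hlip
      rw [(h.odd_step _ (odd_two_mul_add_one l)).2, pow_succ', mul_assoc]
      exact hlip.trans (mul_le_mul_of_nonneg_left (h.dist_v_two_mul_le hτ hη l) (by positivity))
    · rw [(h.odd_step _ (odd_two_mul_add_one l)).2, h.v_two_mul_add_two, dist_self]
      positivity

theorem abs_marginalDefect_le (h : IsSinkhornSequence a b C τ η u v) (hτ : 0 < τ) (hη : 0 < η)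
    {R : ℝ} (hR : dist (v 0) (sinkhornSweep a b C τ η (v 0)) ≤ 2 * (η * τ / (η + τ)) * R)
    (k : ℕ) :
    (∀ i, |marginalDefect τ a (rowSum (gibbsPlan C η (u (k + 1)) (v (k + 1)))) (u (k + 1)) i|
        ≤ 2 * τ * R * (τ / (η + τ)) ^ k) ∧
      ∀ j, |marginalDefect τ b (colSum (gibbsPlan C η (u (k + 1)) (v (k + 1)))) (v (k + 1)) j|
        ≤ 2 * τ * R * (τ / (η + τ)) ^ k := by
  obtain ⟨hu, hv⟩ := h.dist_sinkhornStep_le hτ hη k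
  have hscale : ∀ {d : ℝ}, d ≤ (τ / (η + τ)) ^ k * dist (v 0) (sinkhornSweep a b C τ η (v 0)) →
      (η + τ) / η * d ≤ 2 * τ * R * (τ / (η + τ)) ^ k := fun {d} hd =>
    calc (η + τ) / η * d
        ≤ (η + τ) / η * ((τ / (η + τ)) ^ k * (2 * (η * τ / (η + τ)) * R)) := by
          gcongr
          exact hd.trans (by gcongr)
      _ = 2 * τ * R * (τ / (η + τ)) ^ k := by field_simp
  refine ⟨fun i => (abs_marginalDefect_gibbsPlan_le a C hτ hη _ _ i).trans (hscale hu),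
    fun j => ?_⟩
  rw [← rowSum_gibbsPlan_swap]
  exact (abs_marginalDefect_gibbsPlan_le b _ hτ hη _ _ j).trans (hscale hv)

end IsSinkhornSequence

end Sinkhorn

section Parameters

open Real

variable {τ η : ℝ}

lemma div_add_pow_le_inv (hτ : 0 < τ) (hη : 0 < η) {W : ℝ} (hW : 0 < W) {k : ℕ}
    (hk : (τ / η + 1) * log W ≤ k) : (τ / (η + τ)) ^ k ≤ W⁻¹ := by
  have hbase : τ / (η + τ) ≤ exp (-(η / (η + τ))) := by
    rw [show τ / (η + τ) = 1 - η / (η + τ) by field_simp; ring]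
    exact one_sub_le_exp_neg _
  calc (τ / (η + τ)) ^ k ≤ exp (-(η / (η + τ))) ^ k := by gcongr
    _ = exp (-(k * (η / (η + τ)))) := by rw [← exp_nat_mul, mul_neg]
    _ ≤ exp (-((τ / η + 1) * log W * (η / (η + τ)))) := by gcongr
    _ = exp (-log W) := by congr 2; field_simp; ring
    _ = W⁻¹ := by rw [exp_neg, exp_log hW]

lemma log_threshold_eq {R : ℝ} (hτ : 0 < τ) (hη : 0 < η) (hR : 0 < R) :
    log (8 * η * R) + log (τ * (τ + 1)) + 3 * log η⁻¹ = log (8 * R * τ * (τ + 1) / η ^ 2) := by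
  have hcube : 3 * log η⁻¹ = log (η⁻¹ ^ 3) := by rw [log_pow]; norm_num
  rw [hcube, ← log_mul (by positivity) (by positivity), ← log_mul (by positivity) (by positivity)]
  congr 1
  field_simp

lemma exists_succ_of_threshold_le {R : ℝ} (hτ : 0 < τ) (hη : 0 < η) (hητ : η ≤ τ)
    (hR : 1 / 2 ≤ R) {k : ℕ}
    (hk : 1 + (τ / η + 1) * (log (8 * η * R) + log (τ * (τ + 1)) + 3 * log η⁻¹) ≤ k) :
    ∃ m, k = m + 1 ∧ 2 * τ * R * (τ / (η + τ)) ^ m ≤ η / 2 := by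
  have hR0 : 0 < R := by linarith
  set W := 8 * R * τ * (τ + 1) / η ^ 2 with hW
  rw [log_threshold_eq hτ hη hR0, ← hW] at hk
  have hW_one : 1 ≤ W := by
    rw [hW, one_le_div (by positivity)]
    nlinarith [mul_nonneg (sub_nonneg.2 hR) (by positivity : 0 ≤ τ * (τ + 1))]
  have hk_one : (1 : ℝ) ≤ k := by
    have : 0 ≤ (τ / η + 1) * log W := mul_nonneg (by positivity) (log_nonneg hW_one)
    linarith
  obtain ⟨m, rfl⟩ := Nat.exists_eq_add_of_le' (by exact_mod_cast hk_one : 1 ≤ k)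
  push_cast at hk
  refine ⟨m, rfl, ?_⟩
  calc 2 * τ * R * (τ / (η + τ)) ^ m ≤ 2 * τ * R * W⁻¹ := by
        gcongr
        exact div_add_pow_le_inv hτ hη (by linarith) (by linarith)
    _ = η / 2 * (η / (2 * (τ + 1))) := by rw [hW]; field_simp; norm_num
    _ ≤ η / 2 := by
        refine mul_le_of_le_one_right (by positivity) ((div_le_one (by positivity)).2 ?_)
        linarith

lemma regularization_bounds {ε σ L w U : ℝ} (hτ : 0 < τ) (hε : 0 < ε)
    (hU : U = max (max σ (2 * ε)) (max (4 * ε * L / τ) (4 * ε * w * L / τ))) :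
    0 < ε / U ∧ ε / U * σ ≤ ε ∧ 4 * (ε / U) * L ≤ τ ∧ 4 * (ε / U) * w * L ≤ τ := by
  obtain ⟨⟨hσ, h2ε⟩, hL, hw⟩ : (σ ≤ U ∧ 2 * ε ≤ U) ∧ 4 * ε * L / τ ≤ U ∧ 4 * ε * w * L / τ ≤ U := by
    simpa only [max_le_iff] using hU.ge
  have hU0 : 0 < U := by linarith
  rw [div_le_iff₀ hτ, mul_comm U] at hL hw
  refine ⟨by positivity, ?_, ?_, ?_⟩
  · rw [div_mul_eq_mul_div, div_le_iff₀ hU0]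
    gcongr
  · rw [mul_div_assoc', div_mul_eq_mul_div, div_le_iff₀ hU0]
    exact hL
  · rw [mul_div_assoc', div_mul_eq_mul_div, div_mul_eq_mul_div, div_le_iff₀ hU0]
    exact hw

lemma half_le_log_natCast {n : ℕ} (hn : 2 ≤ n) : 1 / 2 ≤ log n := by
  have : log 2 ≤ log n := log_le_log two_pos (by exact_mod_cast hn)
  linarith [log_two_gt_d9]

end Parameters

/-- Main theorem: with `η = ε/U` and `k` at least the stated threshold, the Sinkhorn
iterate `X^k = B(u^k, v^k)` is an `ε`-approximation of the UOT optimum `X̂`, i.e.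
`f(X^k) ≤ f(X̂) + ε`. -/
theorem stmt_19 {n : ℕ} (hn : 2 ≤ n) (a b : Fin n → ℝ)
    (ha : ∀ i, 0 < a i) (hb : ∀ j, 0 < b j)
    (C : Fin n → Fin n → ℝ) (hC : ∀ i j, 0 ≤ C i j)
    (τ : ℝ) (hτ : 0 < τ) (ε : ℝ) (hε : 0 < ε)
    (S T U η : ℝ)
    (hS : S = ((∑ i, a i) + (∑ j, b j)) / 2 + 1 / 2 + 1 / (4 * Real.log n))
    (hT : T = (((∑ i, a i) + (∑ j, b j)) / 2)
        * (Real.log (((∑ i, a i) + (∑ j, b j)) / 2) + 2 * Real.log n - 1)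
      + Real.log n + 5 / 2)
    (hU : U = max (max (S + T) (2 * ε))
        (max (4 * ε * Real.log n / τ)
          (4 * ε * ((∑ i, a i) + (∑ j, b j)) * Real.log n / τ)))
    (hηdef : η = ε / U)
    (Xhat : Fin n → Fin n → ℝ) (hXhat : ∀ i j, 0 ≤ Xhat i j)
    (hfmin : ∀ Y : Fin n → Fin n → ℝ, (∀ i j, 0 ≤ Y i j) →
      fUOT a b C τ Xhat ≤ fUOT a b C τ Y)
    (ustar vstar : Fin n → ℝ)
    (hmin : ∀ p q : Fin n → ℝ, dualUOT a b C τ η ustar vstar ≤ dualUOT a b C τ η p q)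
    (u v : ℕ → Fin n → ℝ)
    (h0u : u 0 = 0) (h0v : v 0 = 0)
    (heven : ∀ k : ℕ, Even k →
      (u (k + 1) = fun i => (η * τ / (η + τ)) *
          (u k i / η + Real.log (a i)
            - Real.log (∑ j, Real.exp ((u k i + v k j - C i j) / η))))
        ∧ v (k + 1) = v k)
    (hodd : ∀ k : ℕ, Odd k →
      (v (k + 1) = fun j => (η * τ / (η + τ)) *
          (v k j / η + Real.log (b j)
            - Real.log (∑ i, Real.exp ((u k i + v k j - C i j) / η))))
        ∧ u (k + 1) = u k)
    (R : ℝ)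
    (hR : R = max ‖(fun i => Real.log (a i))‖ ‖(fun j => Real.log (b j))‖
      + max (Real.log n) (‖C‖ / η - Real.log n))
    (k : ℕ)
    (hk : 1 + (τ * U / ε + 1) * (Real.log (8 * η * R) + Real.log (τ * (τ + 1))
        + 3 * Real.log (U / ε)) ≤ (k : ℝ)) :
    fUOT a b C τ (fun i j => Real.exp ((u k i + v k j - C i j) / η))
      ≤ fUOT a b C τ Xhat + ε := by
  have : NeZero n := ⟨by omega⟩
  have hL := half_le_log_natCast hn
  obtain ⟨hη, hηST, hηL, hηwL⟩ := regularization_bounds hτ hε hU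
  rw [← hηdef] at hη hηST hηL hηwL
  have hητ : η ≤ τ := by nlinarith
  have hU_div : U / ε = η⁻¹ := by rw [hηdef, inv_div]
  rw [mul_div_assoc, hU_div, ← div_eq_mul_inv] at hk
  have hR_half : 1 / 2 ≤ R := by
    rw [hR]
    exact hL.trans (le_add_of_nonneg_of_le (le_max_of_le_left (norm_nonneg _)) (le_max_left _ _))
  have hstart : dist (v 0) (sinkhornSweep a b C τ η (v 0)) ≤ 2 * (η * τ / (η + τ)) * R := by
    rw [h0v, dist_zero_left]
    exact norm_sinkhornSweep_zero_le hC hτ hη (by simp [hR]) (by simp [hR])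
  have hseq : IsSinkhornSequence a b C τ η u v := ⟨heven, hodd⟩
  obtain ⟨m, rfl, hsmall⟩ := exists_succ_of_threshold_le hτ hη hητ hR_half hk
  obtain ⟨hrow, hcol⟩ := hseq.abs_marginalDefect_le hτ hη hstart m
  have hmass := totalMass_le_of_forall_fUOT_le ha hb hC hτ hXhat hfmin
  have hopt := fUOT_gibbsPlan_le hn ha hb hC hη (by linarith) (mul_div_cancel₀ _ two_ne_zero).symm
    hηL (by linarith) (fun i => (hrow i).trans hsmall) (fun j => (hcol j).trans hsmall) hXhat hmass
  rw [← hS, ← hT] at hopt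
  exact hopt.trans (by gcongr)
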